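/- Let d ∈ ℕ and 0 < α < d. There exists a constant c₁ > 0, depending only on α and d, such that for every θ ∈ [0,1] and all Lebesgue-measurable sets A, B ⊆ ℝ^d of finite measure, ‖I_α^θ(χ_A, χ_B)‖_{L^{d/(2d−α), ∞}(ℝ^d)} ≤ c₁ |A| |B|. -/

import Mathlib

open MeasureTheory ENNReal

/-- The bilinear fractional integral operator
`I_α^θ(f,g)(x) = ∫_{ℝ^d} f(x + (θ−1)y) g(x + θy) |y|^{α−d} dy`. -/
noncomputable def Iop (d : ℕ) (α θ : ℝ)
    (f g : EuclideanSpace ℝ (Fin d) → ℝ≥0∞) (x : EuclideanSpace ℝ (Fin d)) : ℝ≥0∞ :=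
  ∫⁻ y : EuclideanSpace ℝ (Fin d),
    f (x + (θ - 1) • y) * g (x + θ • y) * ENNReal.ofReal (‖y‖ ^ (α - (d : ℝ)))

/-- The weak `L^r` quasi-norm `sup_{λ > 0} λ · |{x : h x > λ}|^{1/r}`. -/
noncomputable def wLp (d : ℕ) (r : ℝ)
    (h : EuclideanSpace ℝ (Fin d) → ℝ≥0∞) : ℝ≥0∞ :=
  ⨆ (lam : ℝ) (_ : 0 < lam),
    ENNReal.ofReal lam * (volume {x | ENNReal.ofReal lam < h x}) ^ (1 / r)

abbrev EE (d : ℕ) := EuclideanSpace ℝ (Fin d)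

lemma l1 (d : ℕ) (θ : ℝ) (f g : EE d → ℝ≥0∞) (hf : Measurable f) (hg : Measurable g) :
    ∫⁻ x, ∫⁻ y, f (x + (θ - 1) • y) * g (x + θ • y) = (∫⁻ x, f x) * ∫⁻ x, g x := by
  rw [lintegral_lintegral_swap (by fun_prop)]
  have h1 : ∀ y : EE d, ∫⁻ x, f (x + (θ - 1) • y) * g (x + θ • y) = ∫⁻ x, f x * g (x + y) := by
    intro y
    rw [← lintegral_add_right_eq_self (fun x => f x * g (x + y)) ((θ - 1) • y)]
    congr 1 with x
    congr 2
    module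
  simp_rw [h1]
  rw [lintegral_lintegral_swap (by fun_prop)]
  have h2 : ∀ x : EE d, ∫⁻ y, f x * g (x + y) = f x * ∫⁻ y, g y := by
    intro x
    rw [lintegral_const_mul _ (by fun_prop), lintegral_add_left_eq_self (fun y => g y) x]
  simp_rw [h2]
  rw [lintegral_mul_const _ hf]

lemma cs {X : Type*} [MeasurableSpace X] (μ : Measure X) (u v : X → ℝ≥0∞) (hu : Measurable u)
    (hv : Measurable v) :
    ∫⁻ x, (u x * v x) ^ (1 / 2 : ℝ) ∂μ ≤
      ((∫⁻ x, u x ∂μ) * (∫⁻ x, v x ∂μ)) ^ (1 / 2 : ℝ) := by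
  have h := ENNReal.lintegral_mul_le_Lp_mul_Lq μ (p := 2) (q := 2)
    (by constructor <;> norm_num) (f := fun x => u x ^ (1 / 2 : ℝ)) (g := fun x => v x ^ (1 / 2 : ℝ))
    (by fun_prop) (by fun_prop)
  have e : ∀ t : ℝ≥0∞, (t ^ (1 / 2 : ℝ)) ^ (2 : ℝ) = t := by
    intro t
    rw [← ENNReal.rpow_mul]; norm_num
  simp only [e, Pi.mul_apply] at h
  simp_rw [ENNReal.mul_rpow_of_nonneg _ _ (show (0 : ℝ) ≤ 1 / 2 by norm_num)]
  exact h

noncomputable def ph (d : ℕ) (r : ℝ) : EE d → ℝ≥0∞ := (Metric.closedBall 0 r).indicator 1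

lemma ph_meas (d : ℕ) (r : ℝ) : Measurable (ph d r) :=
  measurable_one.indicator Metric.isClosed_closedBall.measurableSet

lemma ph_of_le (d : ℕ) (r : ℝ) (x : EE d) (h : ‖x‖ ≤ r) : ph d r x = 1 := by
  simp [ph, h]

lemma ph_of_lt (d : ℕ) (r : ℝ) (x : EE d) (h : r < ‖x‖) : ph d r x = 0 := by
  simp [ph, h]

lemma ph_int (d : ℕ) (r : ℝ) : ∫⁻ x, ph d r x = volume (Metric.closedBall (0 : EE d) r) := by
  rw [ph, lintegral_indicator_one Metric.isClosed_closedBall.measurableSet]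

lemma avg (d : ℕ) (r : ℝ) (h : EE d → ℝ≥0∞) (hh : Measurable h) :
    ∫⁻ z, ∫⁻ x, ph d r (x - z) * h x = volume (Metric.closedBall (0 : EE d) r) * ∫⁻ x, h x := by
  have := ph_meas d r
  rw [lintegral_lintegral_swap (by fun_prop)]
  have h2 : ∀ x : EE d, ∫⁻ z, ph d r (x - z) * h x
      = volume (Metric.closedBall (0 : EE d) r) * h x := by
    intro x
    rw [lintegral_mul_const _ (by fun_prop), lintegral_sub_left_eq_self (fun z => ph d r z) x,
      ph_int]
  simp_rw [h2]
  rw [lintegral_const_mul _ hh]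

noncomputable def Ir (d : ℕ) (θ r : ℝ) (f g : EE d → ℝ≥0∞) (x : EE d) : ℝ≥0∞ :=
  ∫⁻ y, f (x + (θ - 1) • y) * g (x + θ • y) * ph d r y

lemma Ir_meas (d : ℕ) (θ r : ℝ) (f g : EE d → ℝ≥0∞) (hf : Measurable f) (hg : Measurable g) :
    Measurable (Ir d θ r f g) := by
  have := ph_meas d r
  unfold Ir
  apply Measurable.lintegral_prod_right'
    (f := fun p : EE d × EE d => f (p.1 + (θ - 1) • p.2) * g (p.1 + θ • p.2) * ph d r p.2)
  fun_prop

lemma vol_two (d : ℕ) (r : ℝ) (hr : 0 < r) : volume (Metric.closedBall (0 : EE d) r)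
    = ENNReal.ofReal (r ^ d) * volume (Metric.ball (0 : EE d) 1) := by
  have h := Measure.addHaar_closedBall (volume : Measure (EE d)) 0 hr.le
  rwa [finrank_euclideanSpace_fin] at h

lemma half (d : ℕ) (θ r : ℝ) (h0 : 0 ≤ θ) (h1 : θ ≤ 1) (hr : 0 < r) (f g : EE d → ℝ≥0∞)
    (hf : Measurable f) (hg : Measurable g) :
    ∫⁻ x, (Ir d θ r f g x) ^ (1 / 2 : ℝ) ≤
      2 ^ d * (volume (Metric.closedBall (0 : EE d) r)) ^ (1 / 2 : ℝ)
        * ((∫⁻ x, f x) * ∫⁻ x, g x) ^ (1 / 2 : ℝ) := by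
  have p1 := ph_meas d r
  have p2 := ph_meas d (2 * r)
  have p3 := Ir_meas d θ r f g hf hg
  set W := volume (Metric.closedBall (0 : EE d) r) with hW
  have hW0 : W ≠ 0 := (Metric.measure_closedBall_pos _ _ hr).ne'
  have hWt : W ≠ ∞ := measure_closedBall_lt_top.ne
  have hhalf : (0 : ℝ) ≤ 1 / 2 := by norm_num
  have hW2 : volume (Metric.closedBall (0 : EE d) (2 * r)) = 2 ^ d * W := by
    rw [hW, vol_two _ _ hr, vol_two _ _ (by positivity), mul_pow,
      ENNReal.ofReal_mul (by positivity), ENNReal.ofReal_pow (by norm_num), mul_assoc]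
    simp
  rw [← ENNReal.mul_le_mul_iff_right hW0 hWt, ← avg d r _ (by fun_prop)]
  set F : EE d → EE d → ℝ≥0∞ := fun z x => ph d (2 * r) (x - z) * f x with hF
  set G : EE d → EE d → ℝ≥0∞ := fun z x => ph d (2 * r) (x - z) * g x with hG
  have key : ∀ z : EE d, ∫⁻ x, ph d r (x - z) * (Ir d θ r f g x) ^ (1 / 2 : ℝ) ≤
      W ^ (1 / 2 : ℝ) * ((∫⁻ x, F z x) * ∫⁻ x, G z x) ^ (1 / 2 : ℝ) := by
    intro z
    have e : ∀ x, ph d r (x - z) * (Ir d θ r f g x) ^ (1 / 2 : ℝ) =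
        (ph d r (x - z) * (ph d r (x - z) * Ir d θ r f g x)) ^ (1 / 2 : ℝ) := by
      intro x
      rcases le_or_gt ‖x - z‖ r with h | h
      · simp [ph_of_le d r _ h]
      · simp [ph_of_lt d r _ h]
    simp_rw [e]
    refine (cs volume _ _ (by fun_prop) (by fun_prop)).trans ?_
    rw [lintegral_sub_right_eq_self (fun x => ph d r x) z, ph_int,
      ENNReal.mul_rpow_of_nonneg _ _ hhalf]
    gcongr
    rw [← l1 d θ (F z) (G z) (by fun_prop) (by fun_prop)]
    apply lintegral_mono
    intro x
    dsimp only
    rcases le_or_gt ‖x - z‖ r with h | h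
    · rw [ph_of_le d r _ h, one_mul]
      unfold Ir
      apply lintegral_mono
      intro y
      dsimp only
      rcases le_or_gt ‖y‖ r with hy | hy
      · have b : ∀ c : ℝ, |c| ≤ 1 → ‖x + c • y - z‖ ≤ 2 * r := by
          intro c hc
          have : x + c • y - z = (x - z) + c • y := by abel
          rw [this]
          refine (norm_add_le _ _).trans ?_
          rw [norm_smul, Real.norm_eq_abs]
          nlinarith [norm_nonneg y, abs_nonneg c]
        rw [hF, hG]
        dsimp only
        rw [ph_of_le _ _ _ (b (θ - 1) (by rw [abs_le]; constructor <;> linarith)),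
          ph_of_le _ _ _ (b θ (by rw [abs_le]; constructor <;> linarith)), ph_of_le _ _ _ hy]
        simp
      · simp [ph_of_lt d r _ hy]
    · simp [ph_of_lt d r _ h]
  refine (lintegral_mono key).trans ?_
  have mF : Measurable fun z => ∫⁻ x, F z x := by
    apply Measurable.lintegral_prod_right'
      (f := fun p : EE d × EE d => ph d (2 * r) (p.2 - p.1) * f p.2)
    fun_prop
  have mG : Measurable fun z => ∫⁻ x, G z x := by
    apply Measurable.lintegral_prod_right'
      (f := fun p : EE d × EE d => ph d (2 * r) (p.2 - p.1) * g p.2)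
    fun_prop
  rw [lintegral_const_mul _ (by fun_prop)]
  calc _ ≤ W ^ (1 / 2 : ℝ) * ((∫⁻ z, ∫⁻ x, F z x) * ∫⁻ z, ∫⁻ x, G z x) ^ (1 / 2 : ℝ) := by
        gcongr
        exact cs volume _ _ mF mG
    _ = W ^ (1 / 2 : ℝ) * ((2 ^ d * W) ^ (2 : ℝ) * ((∫⁻ x, f x) * ∫⁻ x, g x)) ^ (1 / 2 : ℝ) := by
        rw [avg d _ f hf, avg d _ g hg, hW2, ENNReal.rpow_two]
        congr 2
        ring
    _ = _ := by
        rw [ENNReal.mul_rpow_of_nonneg _ _ hhalf, ← ENNReal.rpow_mul]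
        norm_num
        ring

lemma sqrt_tsum (a : ℕ → ℝ≥0∞) : (∑' k, a k) ^ (1 / 2 : ℝ) ≤ ∑' k, (a k) ^ (1 / 2 : ℝ) := by
  have hfin : ∀ s : Finset ℕ, (∑ k ∈ s, a k) ^ (1 / 2 : ℝ) ≤ ∑ k ∈ s, (a k) ^ (1 / 2 : ℝ) := by
    intro s
    induction s using Finset.induction_on with
    | empty => simp
    | insert i s hi ih =>
      rw [Finset.sum_insert hi, Finset.sum_insert hi]
      exact (ENNReal.rpow_add_le_add_rpow _ _ (by norm_num) (by norm_num)).trans (by gcongr)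
  have ht : Filter.Tendsto (fun s : Finset ℕ => (∑ k ∈ s, a k) ^ (1 / 2 : ℝ)) Filter.atTop
      (nhds ((∑' k, a k) ^ (1 / 2 : ℝ))) :=
    (ENNReal.continuous_rpow_const.tendsto _).comp ENNReal.summable.hasSum
  exact le_of_tendsto' ht fun s => (hfin s).trans (ENNReal.sum_le_tsum s)

lemma kernel_le (d : ℕ) (α R : ℝ) (hαd : α < d) (hR : 0 < R) (y : EE d) :
    ENNReal.ofReal (‖y‖ ^ (α - (d : ℝ))) ≤
      (∑' k : ℕ, ENNReal.ofReal ((R * (1 / 2) ^ (k + 1)) ^ (α - (d : ℝ))) *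
        ph d (R * (1 / 2) ^ k) y) + ENNReal.ofReal (R ^ (α - (d : ℝ))) := by
  have hneg : α - (d : ℝ) < 0 := by linarith
  rcases le_or_gt ‖y‖ R with h | h
  · rcases (norm_nonneg y).eq_or_lt with h0 | h0
    · rw [← h0, Real.zero_rpow hneg.ne]; simp
    · obtain ⟨k, hk1, hk2⟩ := exists_nat_pow_near_of_lt_one (x := ‖y‖ / R) (y := (1 / 2 : ℝ))
        (by positivity) ((div_le_one hR).2 h) (by norm_num) (by norm_num)
      rw [lt_div_iff₀ hR] at hk1
      rw [div_le_iff₀ hR] at hk2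
      refine le_trans ?_ le_self_add
      refine le_trans ?_ (ENNReal.le_tsum k)
      rw [ph_of_le _ _ _ (by linarith), mul_one]
      apply ENNReal.ofReal_le_ofReal
      exact Real.rpow_le_rpow_of_nonpos (by positivity) (by linarith) hneg.le
  · refine le_trans ?_ le_add_self
    apply ENNReal.ofReal_le_ofReal
    exact Real.rpow_le_rpow_of_nonpos (by positivity) h.le hneg.le

lemma Iop_le (d : ℕ) (α θ R : ℝ) (hαd : α < d) (hR : 0 < R) (f g : EE d → ℝ≥0∞)
    (hf : Measurable f) (hg : Measurable g) (x : EE d) :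
    Iop d α θ f g x ≤
      (∑' k : ℕ, ENNReal.ofReal ((R * (1 / 2) ^ (k + 1)) ^ (α - (d : ℝ))) *
        Ir d θ (R * (1 / 2) ^ k) f g x) +
      ENNReal.ofReal (R ^ (α - (d : ℝ))) * ∫⁻ y, f (x + (θ - 1) • y) * g (x + θ • y) := by
  have hp : ∀ r, Measurable (ph d r) := ph_meas d
  unfold Iop
  refine (lintegral_mono fun y => mul_le_mul_right (kernel_le d α R hαd hR y) _).trans ?_
  simp_rw [mul_add, ← ENNReal.tsum_mul_left]
  rw [lintegral_add_right _ (by fun_prop), lintegral_tsum (by intro k; have := hp (R * (1 / 2) ^ k); fun_prop)]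
  apply le_of_eq
  congr 1
  · congr 1 with k
    unfold Ir
    have := hp (R * (1 / 2) ^ k)
    rw [← lintegral_const_mul _ (by fun_prop)]
    congr 1 with y
    ring
  · rw [lintegral_mul_const _ (by fun_prop), mul_comm]

noncomputable def KK (d : ℕ) (α : ℝ) : ℝ≥0∞ :=
  ∑' k : ℕ, 2 ^ d * (volume (Metric.ball (0 : EE d) 1)) ^ (1 / 2 : ℝ) *
    ENNReal.ofReal (2 ^ (((d : ℝ) - α) / 2) * (2 ^ (-α / 2)) ^ k)

lemma KK_ne_top (d : ℕ) (α : ℝ) (hα : 0 < α) : KK d α ≠ ∞ := by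
  unfold KK
  rw [ENNReal.tsum_mul_left]
  apply ENNReal.mul_ne_top
  · apply ENNReal.mul_ne_top (by simp)
    exact ENNReal.rpow_ne_top_of_nonneg (by norm_num) measure_ball_lt_top.ne
  · rw [← ENNReal.ofReal_tsum_of_nonneg (fun k => by positivity)]
    · exact ENNReal.ofReal_ne_top
    · apply Summable.mul_left
      apply summable_geometric_of_lt_one (by positivity)
      exact Real.rpow_lt_one_of_one_lt_of_neg (by norm_num) (by linarith)

lemma coef (d k : ℕ) (α R : ℝ) (hR : 0 < R) :
    ENNReal.ofReal ((R * (1 / 2) ^ (k + 1)) ^ (α - (d : ℝ))) ^ (1 / 2 : ℝ) *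
      ENNReal.ofReal ((R * (1 / 2) ^ k) ^ d) ^ (1 / 2 : ℝ) =
    ENNReal.ofReal (R ^ (α / 2)) *
      ENNReal.ofReal (2 ^ (((d : ℝ) - α) / 2) * (2 ^ (-α / 2)) ^ k) := by
  rw [ENNReal.ofReal_rpow_of_pos (by positivity), ENNReal.ofReal_rpow_of_pos (by positivity),
    ← ENNReal.ofReal_mul (by positivity), ← ENNReal.ofReal_mul (by positivity)]
  congr 1
  obtain ⟨t, rfl⟩ : ∃ t, R = Real.exp t := ⟨Real.log R, (Real.exp_log hR).symm⟩
  obtain ⟨u, hu⟩ : ∃ u, (2 : ℝ) = Real.exp u := ⟨Real.log 2, (Real.exp_log (by norm_num)).symm⟩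
  have h2 : (1 / 2 : ℝ) = Real.exp (-u) := by rw [Real.exp_neg, ← hu]; norm_num
  have e1 : ∀ n : ℕ, (1 / 2 : ℝ) ^ n = Real.exp (-u * n) := by
    intro n; rw [h2, ← Real.exp_nat_mul, mul_comm]
  have e2 : ∀ a : ℝ, (2 : ℝ) ^ a = Real.exp (u * a) := by
    intro a; rw [hu, ← Real.exp_mul]
  rw [e1, e1, e2, e2]
  simp only [← Real.exp_add, ← Real.exp_mul, ← Real.exp_nat_mul]
  congr 1
  push_cast
  ring

lemma small (d : ℕ) (α θ R : ℝ) (h0 : 0 ≤ θ) (h1 : θ ≤ 1) (hR : 0 < R) (f g : EE d → ℝ≥0∞)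
    (hf : Measurable f) (hg : Measurable g) :
    ∫⁻ x, ∑' k : ℕ, (ENNReal.ofReal ((R * (1 / 2) ^ (k + 1)) ^ (α - (d : ℝ))) *
        Ir d θ (R * (1 / 2) ^ k) f g x) ^ (1 / 2 : ℝ) ≤
      KK d α * ENNReal.ofReal (R ^ (α / 2)) * ((∫⁻ x, f x) * ∫⁻ x, g x) ^ (1 / 2 : ℝ) := by
  have hhalf : (0 : ℝ) ≤ 1 / 2 := by norm_num
  have hI : ∀ r, Measurable (Ir d θ r f g) := fun r => Ir_meas d θ r f g hf hg
  rw [lintegral_tsum (by intro k; have := hI (R * (1 / 2) ^ k); fun_prop), KK, ← ENNReal.tsum_mul_right, ← ENNReal.tsum_mul_right]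
  apply ENNReal.tsum_le_tsum
  intro k
  have := hI (R * (1 / 2) ^ k)
  simp_rw [ENNReal.mul_rpow_of_nonneg _ _ hhalf]
  rw [lintegral_const_mul _ (by fun_prop)]
  have hr : 0 < R * (1 / 2) ^ k := by positivity
  refine (mul_le_mul_right (half d θ _ h0 h1 hr f g hf hg) _).trans ?_
  rw [vol_two _ _ hr, ENNReal.mul_rpow_of_nonneg _ _ hhalf, ENNReal.mul_rpow_of_nonneg _ _ hhalf]
  apply le_of_eq
  have c := coef d k α R hR
  generalize ENNReal.ofReal ((R * (1 / 2) ^ (k + 1)) ^ (α - (d : ℝ))) ^ (1 / 2 : ℝ) = a at *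
  generalize ENNReal.ofReal ((R * (1 / 2) ^ k) ^ d) ^ (1 / 2 : ℝ) = b at *
  generalize volume (Metric.ball (0 : EE d) 1) ^ (1 / 2 : ℝ) = v at *
  generalize (∫⁻ x, f x) ^ (1 / 2 : ℝ) = p at *
  generalize (∫⁻ x, g x) ^ (1 / 2 : ℝ) = q at *
  generalize ENNReal.ofReal (R ^ (α / 2)) = z at *
  generalize ENNReal.ofReal (2 ^ (((d : ℝ) - α) / 2) * (2 ^ (-α / 2)) ^ k) = w at *
  calc _ = 2 ^ d * v * (p * q) * (a * b) := by ring
    _ = _ := by rw [c]; ring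

lemma distr (d : ℕ) (α θ R lam : ℝ) (hαd : α < d) (h0 : 0 ≤ θ) (h1 : θ ≤ 1) (hR : 0 < R)
    (hl : 0 < lam) (f g : EE d → ℝ≥0∞) (hf : Measurable f) (hg : Measurable g) :
    volume {x | ENNReal.ofReal lam < Iop d α θ f g x} ≤
      KK d α * ENNReal.ofReal (R ^ (α / 2)) * ((∫⁻ x, f x) * ∫⁻ x, g x) ^ (1 / 2 : ℝ)
        / ENNReal.ofReal (lam / 2) ^ (1 / 2 : ℝ) +
      ENNReal.ofReal (R ^ (α - (d : ℝ))) * ((∫⁻ x, f x) * ∫⁻ x, g x)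
        / ENNReal.ofReal (lam / 2) := by
  have hhalf : (0 : ℝ) ≤ 1 / 2 := by norm_num
  have hI : ∀ r, Measurable (Ir d θ r f g) := fun r => Ir_meas d θ r f g hf hg
  have hT : Measurable fun x => ∫⁻ y, f (x + (θ - 1) • y) * g (x + θ • y) := by
    apply Measurable.lintegral_prod_right'
      (f := fun p : EE d × EE d => f (p.1 + (θ - 1) • p.2) * g (p.1 + θ • p.2))
    fun_prop
  have e0 : ENNReal.ofReal (lam / 2) ≠ 0 := by simpa using hl
  set S : EE d → ℝ≥0∞ := fun x => ∑' k : ℕ,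
    (ENNReal.ofReal ((R * (1 / 2) ^ (k + 1)) ^ (α - (d : ℝ))) *
        Ir d θ (R * (1 / 2) ^ k) f g x) ^ (1 / 2 : ℝ) with hS
  have mS : Measurable S := by
    apply Measurable.ennreal_tsum
    intro k
    have := hI (R * (1 / 2) ^ k)
    fun_prop
  have sub : {x | ENNReal.ofReal lam < Iop d α θ f g x} ⊆
      {x | ENNReal.ofReal (lam / 2) ^ (1 / 2 : ℝ) ≤ S x} ∪
      {x | ENNReal.ofReal (lam / 2) ≤ ENNReal.ofReal (R ^ (α - (d : ℝ))) *
        ∫⁻ y, f (x + (θ - 1) • y) * g (x + θ • y)} := by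
    intro x hx
    by_contra hcon
    simp only [Set.mem_union, Set.mem_setOf_eq, not_or, not_le] at hcon hx
    obtain ⟨ha, hb⟩ := hcon
    have hs := (sqrt_tsum _).trans_lt ha
    rw [ENNReal.rpow_lt_rpow_iff (by norm_num)] at hs
    have := (Iop_le d α θ R hαd hR f g hf hg x).trans_lt (ENNReal.add_lt_add hs hb)
    rw [← ENNReal.ofReal_add (by positivity) (by positivity), add_halves] at this
    exact lt_asymm this hx
  refine (measure_mono sub).trans ((measure_union_le _ _).trans ?_)
  gcongr
  · refine (meas_ge_le_lintegral_div mS.aemeasurable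
      (by simp [hl]) (by simp)).trans ?_
    gcongr
    exact small d α θ R h0 h1 hR f g hf hg
  · refine (meas_ge_le_lintegral_div (by fun_prop) e0 (by simp)).trans ?_
    rw [lintegral_const_mul _ hT, l1 d θ f g hf hg]

theorem stmt9 (d : ℕ) (α : ℝ) (hα0 : 0 < α) (hαd : α < d) :
    ∃ c₁ : ℝ, 0 < c₁ ∧
      ∀ θ : ℝ, θ ∈ Set.Icc (0 : ℝ) 1 →
        ∀ A B : Set (EuclideanSpace ℝ (Fin d)),
          MeasurableSet A → MeasurableSet B → volume A < ∞ → volume B < ∞ →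
          wLp d ((d : ℝ) / (2 * d - α)) (Iop d α θ (A.indicator 1) (B.indicator 1)) ≤
            ENNReal.ofReal c₁ * volume A * volume B := by
  have hhalf : (0 : ℝ) ≤ 1 / 2 := by norm_num
  have hd : (0 : ℝ) < d := by linarith
  have hq : (0 : ℝ) < 2 * d - α := by linarith
  have hK := KK_ne_top d α hα0
  set q : ℝ := (2 * d - α) / d with hqd
  have hq0 : 0 < q := by positivity
  set k : ℝ := (KK d α).toReal with hk
  have hkK : KK d α = ENNReal.ofReal k := (ENNReal.ofReal_toReal hK).symm
  have hk0 : 0 ≤ k := ENNReal.toReal_nonneg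
  refine ⟨(k * 2 ^ (1 / 2 : ℝ) + 2) ^ q, by positivity, ?_⟩
  rintro θ ⟨h0, h1⟩ A B hA hB hAt hBt
  have hf : Measurable (A.indicator (1 : EE d → ℝ≥0∞)) := measurable_one.indicator hA
  have hg : Measurable (B.indicator (1 : EE d → ℝ≥0∞)) := measurable_one.indicator hB
  unfold wLp
  refine iSup_le fun lam => iSup_le fun hl => ?_
  rw [one_div_div, ← hqd, mul_assoc]
  set p : ℝ := (volume A * volume B).toReal with hp
  have hpP : volume A * volume B = ENNReal.ofReal p :=
    (ENNReal.ofReal_toReal (ENNReal.mul_ne_top hAt.ne hBt.ne)).symm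
  have hp0 : 0 ≤ p := ENNReal.toReal_nonneg
  have D := fun R hR => distr d α θ R lam hαd h0 h1 hR hl _ _ hf hg
  simp only [lintegral_indicator_one hA, lintegral_indicator_one hB, hpP, hkK] at D
  rw [hpP]
  rcases hp0.eq_or_lt with hz | hpos
  · have := D 1 one_pos
    rw [← hz] at this ⊢
    simp only [ENNReal.ofReal_zero, ENNReal.zero_rpow_of_pos (show (0 : ℝ) < 1 / 2 by norm_num),
      mul_zero, ENNReal.zero_div, add_zero, nonpos_iff_eq_zero] at this
    rw [this, ENNReal.zero_rpow_of_pos hq0]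
    simp
  · obtain ⟨t, ht⟩ : ∃ t, p / lam = Real.exp t :=
      ⟨Real.log (p / lam), (Real.exp_log (by positivity)).symm⟩
    have hpl : p = lam * Real.exp t := by rw [← ht]; field_simp
    have := D (Real.exp (t / (2 * d - α))) (Real.exp_pos _)
    have hb : volume {x | ENNReal.ofReal lam < Iop d α θ (A.indicator 1) (B.indicator 1) x} ≤
        ENNReal.ofReal ((k * 2 ^ (1 / 2 : ℝ) + 2) * Real.exp (t / q)) := by
      refine this.trans (le_of_eq ?_)
      rw [ENNReal.ofReal_rpow_of_pos hpos, ENNReal.ofReal_rpow_of_pos (by positivity),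
        ← ENNReal.ofReal_mul (by positivity), ← ENNReal.ofReal_mul (by positivity),
        ← ENNReal.ofReal_mul (by positivity),
        ← ENNReal.ofReal_div_of_pos (by positivity), ← ENNReal.ofReal_div_of_pos (by positivity),
        ← ENNReal.ofReal_add (by positivity) (by positivity)]
      congr 1
      rw [add_mul]
      congr 1
      · rw [mul_div_assoc, mul_assoc, mul_assoc]
        congr 1
        rw [← Real.div_rpow (by positivity) (by positivity)]
        have : p / (lam / 2) = 2 * Real.exp t := by rw [hpl]; field_simp
        rw [this, Real.mul_rpow (by norm_num) (by positivity), ← Real.exp_mul, ← Real.exp_mul,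
          mul_left_comm, ← Real.exp_add]
        congr 2
        rw [hqd]
        field_simp
        ring
      · rw [mul_div_assoc]
        have : p / (lam / 2) = 2 * Real.exp t := by rw [hpl]; field_simp
        rw [this, ← Real.exp_mul, mul_left_comm, ← Real.exp_add]
        congr 2
        rw [hqd]
        field_simp
        ring
    calc _ ≤ ENNReal.ofReal lam *
        ENNReal.ofReal ((k * 2 ^ (1 / 2 : ℝ) + 2) * Real.exp (t / q)) ^ q := by gcongr
      _ = _ := by
        rw [ENNReal.ofReal_rpow_of_pos (by positivity), ← ENNReal.ofReal_mul (by positivity),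
          ← ENNReal.ofReal_mul (by positivity), Real.mul_rpow (by positivity) (by positivity),
          ← Real.exp_mul, div_mul_cancel₀ _ hq0.ne', hpl]
        congr 1
        ring
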